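/- arXiv:2207.06980 — 2 statements merged into one kernel-verified Lean document; each statement's English description precedes it below -/
import Mathlib

section
/- Let α, β₁, β₂ be intuitionistic fuzzy values with β₂ ⊂ β₁ ⊂ α in Atanassov's order. Then Z(α, β₁) ≤ Z(α, β₂), and consequently JS(α, β₁) ≤ JS(α, β₂). -/
/-- `L p q = p·log₂(2p/(p+q)) + q·log₂(2q/(p+q))`, with Lean's conventions
`0 * log₂ _ = 0` and `x / 0 = 0`, `log₂ 0 = 0` implementing `0·log 0 = 0`
and `0·log(0/0) = 0`. -/
noncomputable def L (p q : ℝ) : ℝ :=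
  p * Real.logb 2 (2 * p / (p + q)) + q * Real.logb 2 (2 * q / (p + q))

/-- An intuitionistic fuzzy value: a pair `⟨μ, ν⟩` with `0 ≤ μ`, `0 ≤ ν`,
`μ + ν ≤ 1` (hence also `μ ≤ 1` and `ν ≤ 1`). -/
@[ext]
structure IFV where
  mu : ℝ
  nu : ℝ
  mu_nonneg : 0 ≤ mu
  nu_nonneg : 0 ≤ nu
  sum_le : mu + nu ≤ 1

/-- `Z(α,β) = L(1−μ_α, 1−μ_β) + L(ν_α, ν_β)`. -/
noncomputable def Z (a b : IFV) : ℝ := L (1 - a.mu) (1 - b.mu) + L a.nu b.nu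

/-- The normalized Jensen–Shannon IF divergence `JS(α,β) = √(Z(α,β)/2)`. -/
noncomputable def JS (a b : IFV) : ℝ := Real.sqrt (Z a b / 2)

/-- Atanassov's order: `α ⊂ β` iff `μ_α ≤ μ_β` and `ν_α ≥ ν_β`. -/
def IFV.sub (a b : IFV) : Prop := a.mu ≤ b.mu ∧ b.nu ≤ a.nu

/-- Strict Atanassov order: `α ⊊ β` iff `α ⊂ β` and `α ≠ β`. -/
def IFV.ssub (a b : IFV) : Prop := a.sub b ∧ a ≠ b

/-- The IFV `⟨1, 0⟩`. -/
def IFV.posOne : IFV := ⟨1, 0, by norm_num, le_rfl, by norm_num⟩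

/-- The IFV `⟨0, 1⟩`. -/
def IFV.negOne : IFV := ⟨0, 1, le_rfl, by norm_num, by norm_num⟩

/-! For `0 ≤ p`, the function `L p` is continuous and has derivative `log₂ (2q / (p + q))` at
`q > 0`, which is positive for `q > p`; hence `L p` increases on `[p, ∞)`. Going down Atanassov's
order from `α` to `β₁` to `β₂`, both `1 - μ` and `ν` move upwards from their values at `α`. -/

-- In this form the quotients, and with them the apparent singularities of `L`, are gone.
theorem L_eq_negMulLog (p q : ℝ) :
    L p q = p + q +
      (Real.negMulLog (p + q) - Real.negMulLog p - Real.negMulLog q) / Real.log 2 := by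
  have hlog2 : Real.log 2 ≠ 0 := (Real.log_pos one_lt_two).ne'
  by_cases hpq : p + q = 0
  · -- Both logarithms in `L` are junk zeros here, and `negMulLog` is odd.
    obtain rfl : q = -p := by linarith
    simp only [L, Real.negMulLog, hpq, div_zero, Real.logb_zero, Real.log_neg_eq_log]
    ring
  have hterm (x : ℝ) : x * Real.logb 2 (2 * x / (p + q)) =
      x + (-Real.negMulLog x - x * Real.log (p + q)) / Real.log 2 := by
    rcases eq_or_ne x 0 with rfl | hx
    · simp
    · rw [← Real.log_div_log, Real.log_div (by positivity) hpq, Real.log_mul two_ne_zero hx,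
        Real.negMulLog]
      field_simp
      ring
  simp only [L, hterm, Real.negMulLog]
  ring

theorem continuous_L_right (p : ℝ) : Continuous (L p) := by
  simp only [funext (L_eq_negMulLog p)]
  fun_prop

theorem hasDerivAt_L_right {p q : ℝ} (hq : q ≠ 0) (hpq : p + q ≠ 0) :
    HasDerivAt (L p) (Real.logb 2 (2 * q / (p + q))) q := by
  have hsum : HasDerivAt (fun x ↦ p + x) 1 q := (hasDerivAt_id q).const_add p
  have hent : HasDerivAt (fun x ↦ Real.negMulLog (p + x)) (-Real.log (p + q) - 1) q :=
    (Real.hasDerivAt_negMulLog hpq).comp_const_add p q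
  have hlog2 : Real.log 2 ≠ 0 := (Real.log_pos one_lt_two).ne'
  rw [funext (L_eq_negMulLog p)]
  refine (hsum.add (((hent.sub_const (Real.negMulLog p)).sub
    (Real.hasDerivAt_negMulLog hq)).div_const (Real.log 2))).congr_deriv ?_
  rw [← Real.log_div_log, Real.log_div (by positivity) hpq, Real.log_mul two_ne_zero hq]
  field_simp
  ring

theorem strictMonoOn_L_right {p : ℝ} (hp : 0 ≤ p) : StrictMonoOn (L p) (Set.Ici p) := by
  refine strictMonoOn_of_deriv_pos (convex_Ici p) (continuous_L_right p).continuousOn fun q hq ↦ ?_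
  rw [interior_Ici, Set.mem_Ioi] at hq
  have hq0 : 0 < q := hp.trans_lt hq
  have hpq : 0 < p + q := by positivity
  rw [(hasDerivAt_L_right hq0.ne' hpq.ne').deriv]
  refine Real.logb_pos one_lt_two ?_
  rw [one_lt_div hpq]
  linarith

theorem IFV.mu_le_one (a : IFV) : a.mu ≤ 1 := by
  linarith [a.nu_nonneg, a.sum_le]

theorem Z_JS_anti_of_sub_chain (a b1 b2 : IFV)
    (h1 : b2.sub b1) (h2 : b1.sub a) :
    Z a b1 ≤ Z a b2 ∧ JS a b1 ≤ JS a b2 := by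
  obtain ⟨hmu₁, hnu₁⟩ := h1
  obtain ⟨hmu₂, hnu₂⟩ := h2
  have hL_mu : L (1 - a.mu) (1 - b1.mu) ≤ L (1 - a.mu) (1 - b2.mu) :=
    (strictMonoOn_L_right (sub_nonneg.2 a.mu_le_one)).monotoneOn
      (sub_le_sub_left hmu₂ 1) (sub_le_sub_left (hmu₁.trans hmu₂) 1) (sub_le_sub_left hmu₁ 1)
  have hL_nu : L a.nu b1.nu ≤ L a.nu b2.nu :=
    (strictMonoOn_L_right a.nu_nonneg).monotoneOn hnu₂ (hnu₂.trans hnu₁) hnu₁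
  have hZ : Z a b1 ≤ Z a b2 := add_le_add hL_mu hL_nu
  exact ⟨hZ, Real.sqrt_le_sqrt (div_le_div_of_nonneg_right hZ zero_le_two)⟩
end

section
/- Let x₁, …, xₙ be indices with weights ω₁, …, ωₙ ∈ (0,1] summing to 1, and let I₁ = (α_j^{(1)})_{j=1}^n and I₂ = (α_j^{(2)})_{j=1}^n be families of intuitionistic fuzzy values. Define d_Wu(I₁, I₂) = Σ_{j=1}^n ω_j · JS(α_j^{(1)}, α_j^{(2)}). Then d_Wu(I₁, I₂) = 1 if and only if for every j, either (α_j^{(1)} = ⟨0,1⟩ and α_j^{(2)} = ⟨1,0⟩) or (α_j^{(1)} = ⟨1,0⟩ and α_j^{(2)} = ⟨0,1⟩). -/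
/-! The Bernoulli inequality for exponents in `[0, 1]` bounds `L p q` by `|p - q|`, so `Z` is at
most the `ℓ¹` distance of the pairs `⟨μ, ν⟩`. These pairs range over a triangle of `ℓ¹` diameter
`2`, attained only between `⟨1, 0⟩` and `⟨0, 1⟩`. Hence `JS ≤ 1`, with equality only there, and a
weighted mean of numbers at most `1` equals `1` only if each of positive weight is `1`. -/

theorem one_sub_inv_mul_logb_le_one_sub_inv {b x : ℝ} (hb : 1 < b) (hx : 1 ≤ x) (hxb : x ≤ b) :
    (1 - b⁻¹) * Real.logb b x ≤ 1 - x⁻¹ := by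
  have hb₀ : 0 < b := by positivity
  have hx₀ : 0 < x := by positivity
  have logb_le_one : Real.logb b x ≤ 1 := by
    simpa [Real.logb_self_eq_one hb] using Real.logb_le_logb_of_le hb hx₀ hxb
  have inv_le : x⁻¹ ≤ 1 + Real.logb b x * (b⁻¹ - 1) := calc
    x⁻¹ = (1 + (b⁻¹ - 1)) ^ Real.logb b x := by
      rw [add_sub_cancel, Real.inv_rpow hb₀.le, Real.rpow_logb hb₀ hb.ne' hx₀]
    _ ≤ 1 + Real.logb b x * (b⁻¹ - 1) :=
      rpow_one_add_le_one_add_mul_self (by linarith [inv_pos.2 hb₀])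
        (Real.logb_nonneg hb hx) logb_le_one
  linarith

theorem L_comm (p q : ℝ) : L p q = L q p := by
  rw [L, L, add_comm q p, add_comm]

theorem L_zero_left (q : ℝ) : L 0 q = q := by
  rcases eq_or_ne q 0 with rfl | hq
  · simp [L]
  · simp [L, hq]

theorem L_le_sub {p q : ℝ} (hp : 0 ≤ p) (hpq : p ≤ q) : L p q ≤ q - p := by
  rcases hp.eq_or_lt with rfl | hp
  · simp [L_zero_left]
  have hq : 0 < q := hp.trans_le hpq
  have left_nonpos : p * Real.logb 2 (2 * p / (p + q)) ≤ 0 := by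
    refine mul_nonpos_of_nonneg_of_nonpos hp.le
      (Real.logb_nonpos one_lt_two (by positivity) ?_)
    rw [div_le_one₀ (by positivity)]
    linarith
  have logb_le : (1 - 2⁻¹) * Real.logb 2 (2 * q / (p + q)) ≤ 1 - (2 * q / (p + q))⁻¹ := by
    apply one_sub_inv_mul_logb_le_one_sub_inv one_lt_two
    · rw [one_le_div₀ (by positivity)]
      linarith
    · rw [div_le_iff₀ (by positivity)]
      linarith
  have right_le : q * Real.logb 2 (2 * q / (p + q)) ≤ q - p := calc
    q * Real.logb 2 (2 * q / (p + q))
      = 2 * q * ((1 - 2⁻¹) * Real.logb 2 (2 * q / (p + q))) := by ring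
    _ ≤ 2 * q * (1 - (2 * q / (p + q))⁻¹) := by gcongr
    _ = q - p := by field_simp; ring
  rw [L]
  linarith

theorem L_le_abs_sub {p q : ℝ} (hp : 0 ≤ p) (hq : 0 ≤ q) : L p q ≤ |p - q| := by
  rcases le_total p q with hpq | hqp
  · rw [abs_sub_comm]
    exact (L_le_sub hp hpq).trans (le_abs_self _)
  · rw [L_comm]
    exact (L_le_sub hq hqp).trans (le_abs_self _)

namespace IFV

theorem mu_le_one_s14 (a : IFV) : a.mu ≤ 1 := by
  linarith [a.nu_nonneg, a.sum_le]

theorem nu_le_one (a : IFV) : a.nu ≤ 1 := by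
  linarith [a.mu_nonneg, a.sum_le]

theorem abs_mu_sub_le_one (a b : IFV) : |a.mu - b.mu| ≤ 1 :=
  abs_sub_le_of_nonneg_of_le a.mu_nonneg a.mu_le_one_s14 b.mu_nonneg b.mu_le_one_s14

theorem abs_nu_sub_le_one (a b : IFV) : |a.nu - b.nu| ≤ 1 :=
  abs_sub_le_of_nonneg_of_le a.nu_nonneg a.nu_le_one b.nu_nonneg b.nu_le_one

theorem eq_posOne_of_one_le_mu {a : IFV} (h : 1 ≤ a.mu) : a = posOne := by
  ext <;> simp only [posOne] <;> linarith [a.mu_le_one_s14, a.nu_nonneg, a.sum_le]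

theorem eq_negOne_of_one_le_nu {a : IFV} (h : 1 ≤ a.nu) : a = negOne := by
  ext <;> simp only [negOne] <;> linarith [a.nu_le_one, a.mu_nonneg, a.sum_le]

theorem eq_negOne_and_eq_posOne_of_one_le_sub {a b : IFV} (hmu : 1 ≤ b.mu - a.mu)
    (hnu : 1 ≤ |a.nu - b.nu|) : a = negOne ∧ b = posOne := by
  have hb : 1 ≤ b.mu := by linarith [a.mu_nonneg]
  have ha : 1 ≤ a.nu := by
    rcases le_abs.1 hnu with h | h <;> linarith [a.nu_nonneg, b.nu_nonneg, b.sum_le]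
  exact ⟨eq_negOne_of_one_le_nu ha, eq_posOne_of_one_le_mu hb⟩

theorem eq_negOne_posOne_or_eq_posOne_negOne_of_two_le {a b : IFV}
    (h : 2 ≤ |a.mu - b.mu| + |a.nu - b.nu|) :
    (a = negOne ∧ b = posOne) ∨ (a = posOne ∧ b = negOne) := by
  have hmu : 1 ≤ |a.mu - b.mu| := by linarith [abs_nu_sub_le_one a b]
  have hnu : 1 ≤ |a.nu - b.nu| := by linarith [abs_mu_sub_le_one a b]
  rcases le_abs.1 hmu with hba | hab
  · exact .inr (eq_negOne_and_eq_posOne_of_one_le_sub hba (abs_sub_comm a.nu b.nu ▸ hnu)).symm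
  · exact .inl (eq_negOne_and_eq_posOne_of_one_le_sub (by linarith) hnu)

end IFV

theorem Z_comm (a b : IFV) : Z a b = Z b a := by
  rw [Z, Z, L_comm, L_comm a.nu]

theorem Z_le_abs_mu_sub_add_abs_nu_sub (a b : IFV) :
    Z a b ≤ |a.mu - b.mu| + |a.nu - b.nu| := calc
  Z a b ≤ |(1 - a.mu) - (1 - b.mu)| + |a.nu - b.nu| :=
    add_le_add (L_le_abs_sub (sub_nonneg.2 a.mu_le_one_s14) (sub_nonneg.2 b.mu_le_one_s14))
      (L_le_abs_sub a.nu_nonneg b.nu_nonneg)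
  _ = |a.mu - b.mu| + |a.nu - b.nu| := by rw [sub_sub_sub_cancel_left, abs_sub_comm b.mu]

theorem Z_posOne_negOne : Z IFV.posOne IFV.negOne = 2 := by
  norm_num [Z, IFV.posOne, IFV.negOne, L_zero_left]

theorem Z_eq_two_iff {a b : IFV} :
    Z a b = 2 ↔
      (a = IFV.negOne ∧ b = IFV.posOne) ∨ (a = IFV.posOne ∧ b = IFV.negOne) := by
  constructor
  · intro hZ
    exact IFV.eq_negOne_posOne_or_eq_posOne_negOne_of_two_le
      (hZ.symm.le.trans (Z_le_abs_mu_sub_add_abs_nu_sub a b))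
  · rintro (⟨rfl, rfl⟩ | ⟨rfl, rfl⟩)
    · rw [Z_comm, Z_posOne_negOne]
    · exact Z_posOne_negOne

theorem Z_le_two (a b : IFV) : Z a b ≤ 2 := by
  linarith [Z_le_abs_mu_sub_add_abs_nu_sub a b, a.abs_mu_sub_le_one b, a.abs_nu_sub_le_one b]

theorem JS_le_one (a b : IFV) : JS a b ≤ 1 := by
  rw [JS, Real.sqrt_le_one, div_le_one₀ two_pos]
  exact Z_le_two a b

theorem JS_eq_one_iff {a b : IFV} :
    JS a b = 1 ↔
      (a = IFV.negOne ∧ b = IFV.posOne) ∨ (a = IFV.posOne ∧ b = IFV.negOne) := by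
  rw [JS, Real.sqrt_eq_one, div_eq_one_iff_eq two_ne_zero, Z_eq_two_iff]

theorem sum_mul_eq_sum_iff_of_le_one {ι R : Type*} [Semiring R] [PartialOrder R]
    [IsStrictOrderedRing R] {s : Finset ι} {w f : ι → R} (hw : ∀ i ∈ s, 0 ≤ w i)
    (hf : ∀ i ∈ s, f i ≤ 1) :
    ∑ i ∈ s, w i * f i = ∑ i ∈ s, w i ↔ ∀ i ∈ s, w i ≠ 0 → f i = 1 := by
  rw [Finset.sum_eq_sum_iff_of_le fun i hi ↦ mul_le_of_le_one_right (hw i hi) (hf i hi)]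
  refine forall₂_congr fun i hi ↦ ⟨fun h hwi ↦ ?_, fun h ↦ ?_⟩
  · by_contra hfi
    exact (mul_lt_of_lt_one_right ((hw i hi).lt_of_ne' hwi) ((hf i hi).lt_of_ne hfi)).ne h
  · rcases eq_or_ne (w i) 0 with hwi | hwi
    · rw [hwi, zero_mul]
    · rw [h hwi, mul_one]

theorem dWu_eq_one_iff_general {ι : Type*} (s : Finset ι) (w : ι → ℝ)
    (hw : ∀ j ∈ s, 0 ≤ w j) (hsum : ∑ j ∈ s, w j = 1) (A B : ι → IFV) :
    ∑ j ∈ s, w j * JS (A j) (B j) = 1 ↔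
      ∀ j ∈ s, w j ≠ 0 →
        (A j = IFV.negOne ∧ B j = IFV.posOne) ∨
        (A j = IFV.posOne ∧ B j = IFV.negOne) := by
  simp only [← JS_eq_one_iff]
  have hJS : ∀ j ∈ s, JS (A j) (B j) ≤ 1 := fun j _ ↦ JS_le_one (A j) (B j)
  simpa only [hsum] using sum_mul_eq_sum_iff_of_le_one hw hJS

theorem dWu_eq_one_iff (n : ℕ) (w : Fin n → ℝ)
    (hw : ∀ j, 0 < w j ∧ w j ≤ 1) (hsum : ∑ j, w j = 1)
    (A B : Fin n → IFV) :
    ∑ j, w j * JS (A j) (B j) = 1 ↔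
      ∀ j, (A j = IFV.negOne ∧ B j = IFV.posOne) ∨
           (A j = IFV.posOne ∧ B j = IFV.negOne) := by
  simpa [(hw _).1.ne'] using
    dWu_eq_one_iff_general Finset.univ w (fun j _ ↦ (hw j).1.le) hsum A B
end
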